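/- arXiv:2605.02062 — 8 statements merged into one kernel-verified Lean document; each statement's English description precedes it below -/
import Mathlib

section
/- Let U be a random variable taking values in a measurable space, and let g and h be measurable real-valued functions of U with E[|g(U)|] < ∞, E[|h(U)|] < ∞, and sup_u |g(u) − h(u)| ≤ ε. Let F_g(t) = P(g(U) ≤ t) and F_h(t) = P(h(U) ≤ t). Then ∫_{−∞}^{∞} (F_g(t) − F_h(t))² dt ≤ 4ε. -/
open MeasureTheory ProbabilityTheory

/-- If `g` and `h` are measurable functions of a random variable `U` with integrable
images and `sup_u |g(u) − h(u)| ≤ ε`, then `∫ (F_g(t) − F_h(t))² dt ≤ 4ε`, where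
`F_g` and `F_h` are the CDFs of `g(U)` and `h(U)`. -/
theorem cdf_sup_perturbation_square_integral_le
    {Ω 𝒰 : Type*} [MeasureSpace Ω] [IsProbabilityMeasure (ℙ : Measure Ω)]
    [MeasurableSpace 𝒰] (U : Ω → 𝒰) (hU : Measurable U)
    (g h : 𝒰 → ℝ) (hg : Measurable g) (hh : Measurable h)
    (hig : Integrable (fun ω => g (U ω)) ℙ) (hih : Integrable (fun ω => h (U ω)) ℙ)
    (ε : ℝ) (hε : ∀ u, |g u - h u| ≤ ε) :
    ∫ t : ℝ, ((ℙ {ω | g (U ω) ≤ t}).toReal - (ℙ {ω | h (U ω) ≤ t}).toReal) ^ 2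
      ≤ 4 * ε := by
  have hne : Nonempty Ω := nonempty_of_isProbabilityMeasure (ℙ : Measure Ω)
  obtain ⟨ω₀⟩ := hne
  have hε0 : 0 ≤ ε := (abs_nonneg _).trans (hε (U ω₀))
  have hX : Measurable fun ω => g (U ω) := hg.comp hU
  have hY : Measurable fun ω => h (U ω) := hh.comp hU
  set X : Ω → ℝ := fun ω => g (U ω) with hXdef
  set Y : Ω → ℝ := fun ω => h (U ω) with hYdef
  have hXY : ∀ ω, |X ω - Y ω| ≤ ε := fun ω => hε (U ω)
  change ∫ t : ℝ, ((ℙ {ω | X ω ≤ t}).toReal - (ℙ {ω | Y ω ≤ t}).toReal) ^ 2 ≤ 4 * ε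
  let S : Set (ℝ × Ω) := {p | min (X p.2) (Y p.2) ≤ p.1 ∧ p.1 < max (X p.2) (Y p.2)}
  have hS : MeasurableSet S := by
    apply MeasurableSet.inter
    · exact measurableSet_le ((hX.min hY).comp measurable_snd) measurable_fst
    · exact measurableSet_lt measurable_fst ((hX.max hY).comp measurable_snd)
  have key : ∀ t : ℝ, ENNReal.ofReal
      ‖((ℙ {ω | X ω ≤ t}).toReal - (ℙ {ω | Y ω ≤ t}).toReal) ^ 2‖
      ≤ (ℙ : Measure Ω) (Prod.mk t ⁻¹' S) := by
    intro t
    have h1 : (ℙ : Measure Ω).real {ω | X ω ≤ t} ≤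
        (ℙ : Measure Ω).real {ω | Y ω ≤ t} + (ℙ : Measure Ω).real (Prod.mk t ⁻¹' S) := by
      refine le_trans (measureReal_mono ?_) (measureReal_union_le _ _)
      intro ω hω
      simp only [Set.mem_union, Set.mem_setOf_eq, Set.mem_preimage, S] at hω ⊢
      by_cases hc : Y ω ≤ t
      · exact Or.inl hc
      · exact Or.inr ⟨min_le_of_left_le hω, lt_max_of_lt_right (not_le.mp hc)⟩
    have h2 : (ℙ : Measure Ω).real {ω | Y ω ≤ t} ≤
        (ℙ : Measure Ω).real {ω | X ω ≤ t} + (ℙ : Measure Ω).real (Prod.mk t ⁻¹' S) := by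
      refine le_trans (measureReal_mono ?_) (measureReal_union_le _ _)
      intro ω hω
      simp only [Set.mem_union, Set.mem_setOf_eq, Set.mem_preimage, S] at hω ⊢
      by_cases hc : X ω ≤ t
      · exact Or.inl hc
      · exact Or.inr ⟨min_le_of_right_le hω, lt_max_of_lt_left (not_le.mp hc)⟩
    have b1 : (ℙ : Measure Ω).real {ω | X ω ≤ t} ≤ 1 := measureReal_le_one
    have b2 : (ℙ : Measure Ω).real {ω | Y ω ≤ t} ≤ 1 := measureReal_le_one
    have c1 : 0 ≤ (ℙ : Measure Ω).real {ω | X ω ≤ t} := measureReal_nonneg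
    have c2 : 0 ≤ (ℙ : Measure Ω).real {ω | Y ω ≤ t} := measureReal_nonneg
    apply ENNReal.ofReal_le_of_le_toReal
    change ‖((ℙ : Measure Ω).real {ω | X ω ≤ t} - (ℙ : Measure Ω).real {ω | Y ω ≤ t}) ^ 2‖
      ≤ (ℙ : Measure Ω).real (Prod.mk t ⁻¹' S)
    generalize (ℙ : Measure Ω).real {ω | X ω ≤ t} = a at *
    generalize (ℙ : Measure Ω).real {ω | Y ω ≤ t} = b at *
    generalize (ℙ : Measure Ω).real (Prod.mk t ⁻¹' S) = c at *
    rw [Real.norm_eq_abs, abs_of_nonneg (sq_nonneg _)]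
    have d1 : |a - b| ≤ c := abs_le.mpr ⟨by linarith, by linarith⟩
    have d2 : |a - b| ≤ 1 := abs_le.mpr ⟨by linarith, by linarith⟩
    rw [← sq_abs]
    nlinarith [abs_nonneg (a - b)]
  have tot : ∫⁻ t : ℝ, ENNReal.ofReal
      ‖((ℙ {ω | X ω ≤ t}).toReal - (ℙ {ω | Y ω ≤ t}).toReal) ^ 2‖ ≤ ENNReal.ofReal ε := by
    refine (lintegral_mono key).trans ?_
    rw [← Measure.prod_apply hS, Measure.prod_apply_symm hS]
    have hpt : ∀ ω, (volume : Measure ℝ) ((fun t => (t, ω)) ⁻¹' S) ≤ ENNReal.ofReal ε := by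
      intro ω
      have : (fun t => (t, ω)) ⁻¹' S = Set.Ico (min (X ω) (Y ω)) (max (X ω) (Y ω)) := rfl
      rw [this, Real.volume_Ico, max_sub_min_eq_abs']
      exact ENNReal.ofReal_le_ofReal (hXY ω)
    refine (lintegral_mono hpt).trans ?_
    simp
  calc _ ≤ _ := Real.le_norm_self _
    _ ≤ _ := norm_integral_le_lintegral_norm _
    _ ≤ (ENNReal.ofReal ε).toReal := ENNReal.toReal_mono ENNReal.ofReal_ne_top tot
    _ = ε := ENNReal.toReal_ofReal hε0
    _ ≤ 4 * ε := by linarith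
end

section
/- Let Z be a real-valued random variable with E[|Z|] < ∞, let Z' be an independent copy of Z, let F_Z(t) = P(Z ≤ t), and let y ∈ ℝ. Then 2·E[|y − Z|] − E[|Z − Z'|] = 2·∫_{−∞}^{∞} (F_Z(t) − 1{y ≤ t})² dt, where 1{y ≤ t} is the indicator function that equals 1 when y ≤ t and 0 otherwise. -/
open MeasureTheory ProbabilityTheory

/-- squared difference of the two indicator functions -/
noncomputable def sqInd (a b t : ℝ) : ℝ :=
  ((if a ≤ t then (1 : ℝ) else 0) - (if b ≤ t then (1 : ℝ) else 0)) ^ 2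

lemma sqInd_eq (a b : ℝ) :
    sqInd a b = Set.indicator (Set.Ico (min a b) (max a b)) (fun _ => (1 : ℝ)) := by
  funext t
  unfold sqInd
  by_cases h1 : a ≤ t <;> by_cases h2 : b ≤ t <;>
    simp [Set.indicator, h1, h2]

lemma sqInd_integrable (a b : ℝ) : Integrable (sqInd a b) := by
  rw [sqInd_eq, integrable_indicator_iff measurableSet_Ico]
  exact integrableOn_const (by simp)

lemma sqInd_integral (a b : ℝ) : ∫ t, sqInd a b t = |a - b| := by
  rw [sqInd_eq, integral_indicator measurableSet_Ico]
  simp [max_sub_min_eq_abs']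

lemma sqInd_nonneg (a b t : ℝ) : 0 ≤ sqInd a b t := sq_nonneg _

lemma ind_meas {Ω : Type*} [MeasurableSpace Ω] (X : Ω → ℝ) (hX : Measurable X) :
    Measurable (fun p : Ω × ℝ => if X p.1 ≤ p.2 then (1 : ℝ) else 0) :=
  Measurable.ite (measurableSet_le (hX.comp measurable_fst) measurable_snd)
    measurable_const measurable_const

lemma sqInd_meas {Ω : Type*} [MeasurableSpace Ω] (X Y : Ω → ℝ)
    (hX : Measurable X) (hY : Measurable Y) :
    Measurable (fun p : Ω × ℝ => sqInd (X p.1) (Y p.1) p.2) :=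
  ((ind_meas X hX).sub (ind_meas Y hY)).pow_const 2

lemma sqInd_prod {Ω : Type*} [MeasurableSpace Ω] (μ : Measure Ω) [IsProbabilityMeasure μ]
    (X Y : Ω → ℝ) (hX : Measurable X) (hY : Measurable Y)
    (hi : Integrable (fun ω => X ω - Y ω) μ) :
    Integrable (fun p : Ω × ℝ => sqInd (X p.1) (Y p.1) p.2) (μ.prod (volume : Measure ℝ)) := by
  rw [integrable_prod_iff (sqInd_meas X Y hX hY).aestronglyMeasurable]
  refine ⟨Filter.Eventually.of_forall fun ω => sqInd_integrable (X ω) (Y ω), ?_⟩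
  have : (fun ω => ∫ t, ‖sqInd (X ω) (Y ω) t‖) = fun ω => |X ω - Y ω| := by
    funext ω
    rw [← sqInd_integral]
    congr 1
    funext t
    exact Real.norm_of_nonneg (sqInd_nonneg _ _ _)
  change Integrable (fun ω => ∫ t, ‖sqInd (X ω) (Y ω) t‖) μ
  rw [this]
  exact hi.abs

lemma sqInd_swap {Ω : Type*} [MeasurableSpace Ω] (μ : Measure Ω) [IsProbabilityMeasure μ]
    (X Y : Ω → ℝ) (hX : Measurable X) (hY : Measurable Y)
    (hi : Integrable (fun ω => X ω - Y ω) μ) :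
    ∫ ω, |X ω - Y ω| ∂μ = ∫ t, ∫ ω, sqInd (X ω) (Y ω) t ∂μ := by
  have h := integral_integral_swap (f := fun ω t => sqInd (X ω) (Y ω) t)
    (sqInd_prod μ X Y hX hY hi)
  rw [← h]
  simp only [sqInd_integral]

lemma sqInd_exp {Ω : Type*} [MeasurableSpace Ω] (μ : Measure Ω) [IsProbabilityMeasure μ]
    (X Y : Ω → ℝ) (hX : Measurable X) (hY : Measurable Y) (t : ℝ) :
    ∫ ω, sqInd (X ω) (Y ω) t ∂μ = μ.real {ω | X ω ≤ t} + μ.real {ω | Y ω ≤ t}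
      - 2 * μ.real ({ω | X ω ≤ t} ∩ {ω | Y ω ≤ t}) := by
  have mX : MeasurableSet {ω | X ω ≤ t} := measurableSet_le hX measurable_const
  have mY : MeasurableSet {ω | Y ω ≤ t} := measurableSet_le hY measurable_const
  have e : (fun ω => sqInd (X ω) (Y ω) t) = fun ω =>
      (Set.indicator {ω | X ω ≤ t} (fun _ => (1 : ℝ)) ω
        + Set.indicator {ω | Y ω ≤ t} (fun _ => (1 : ℝ)) ω)
      - 2 * Set.indicator ({ω | X ω ≤ t} ∩ {ω | Y ω ≤ t}) (fun _ => (1 : ℝ)) ω := by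
    funext ω
    unfold sqInd
    by_cases h1 : X ω ≤ t <;> by_cases h2 : Y ω ≤ t <;>
      simp [Set.indicator, h1, h2] <;> norm_num
  have i : ∀ s : Set Ω, MeasurableSet s →
      Integrable (Set.indicator s (fun _ => (1 : ℝ))) μ :=
    fun s hs => (integrable_const 1).indicator hs
  have v : ∀ s : Set Ω, MeasurableSet s →
      ∫ ω, Set.indicator s (fun _ => (1 : ℝ)) ω ∂μ = μ.real s := by
    intro s hs
    rw [integral_indicator hs]; simp
  have iadd : Integrable (fun ω => Set.indicator {ω | X ω ≤ t} (fun _ => (1 : ℝ)) ω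
        + Set.indicator {ω | Y ω ≤ t} (fun _ => (1 : ℝ)) ω) μ := (i _ mX).add (i _ mY)
  rw [e, integral_sub iadd ((i _ (mX.inter mY)).const_mul 2),
    integral_add (i _ mX) (i _ mY), integral_const_mul, v _ mX, v _ mY, v _ (mX.inter mY)]

/-- For an integrable real random variable `Z` with independent copy `Z'`, CDF `F_Z`,
and any `y ∈ ℝ`: `2 E|y − Z| − E|Z − Z'| = 2 ∫ (F_Z(t) − 1{y ≤ t})² dt`. -/
theorem energy_loss_point_identity
    {Ω : Type*} [MeasureSpace Ω] [IsProbabilityMeasure (ℙ : Measure Ω)]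
    (Z Z' : Ω → ℝ) (hZ : Measurable Z) (hZ' : Measurable Z')
    (hiZ : Integrable Z ℙ)
    (hindep : IndepFun Z Z' ℙ) (hid : IdentDistrib Z Z' ℙ ℙ)
    (y : ℝ) :
    2 * (∫ ω, |y - Z ω| ∂ℙ) - (∫ ω, |Z ω - Z' ω| ∂ℙ)
      = 2 * ∫ t : ℝ, ((ℙ {ω | Z ω ≤ t}).toReal - (if y ≤ t then (1 : ℝ) else 0)) ^ 2 := by
  have hiZ' : Integrable Z' ℙ := hid.integrable_iff.1 hiZ
  have p1 := sqInd_prod ℙ (fun _ => y) Z measurable_const hZ ((integrable_const y).sub hiZ)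
  have p2 := sqInd_prod ℙ Z Z' hZ hZ' (hiZ.sub hiZ')
  rw [sqInd_swap ℙ (fun _ => y) Z measurable_const hZ ((integrable_const y).sub hiZ),
    sqInd_swap ℙ Z Z' hZ hZ' (hiZ.sub hiZ'), ← integral_const_mul,
    ← integral_const_mul, ← integral_sub (p1.integral_prod_right.const_mul 2)
      p2.integral_prod_right]
  congr 1
  funext t
  rw [sqInd_exp ℙ (fun _ => y) Z measurable_const hZ, sqInd_exp ℙ Z Z' hZ hZ']
  have h1 : (ℙ : Measure Ω).real {ω | Z' ω ≤ t} = (ℙ : Measure Ω).real {ω | Z ω ≤ t} := by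
    have := hid.measure_mem_eq (measurableSet_Iic (a := t))
    simp only [Measure.real]
    exact congrArg ENNReal.toReal this.symm
  have h2 : (ℙ : Measure Ω).real ({ω | Z ω ≤ t} ∩ {ω | Z' ω ≤ t})
      = (ℙ : Measure Ω).real {ω | Z ω ≤ t} * (ℙ : Measure Ω).real {ω | Z' ω ≤ t} := by
    have := hindep.measure_inter_preimage_eq_mul _ _ (measurableSet_Iic (a := t))
      (measurableSet_Iic (a := t))
    simp only [Measure.real, ← ENNReal.toReal_mul]
    exact congrArg ENNReal.toReal this
  rw [h2, h1]
  change _ = 2 * ((ℙ : Measure Ω).real {ω | Z ω ≤ t} - _) ^ 2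
  by_cases h : y ≤ t
  · simp only [h, Set.setOf_true, Set.univ_inter, if_true, probReal_univ]; ring
  · simp only [h, Set.setOf_false, Set.empty_inter, if_false, measureReal_empty]; ring
end

section
/- Let 𝒳 be a standard Borel space and let (X, Y) be a random pair with distribution μ₀ on 𝒳 × ℝ such that |Y| ≤ c₀ almost surely for some constant c₀ > 0. Let U and U' be i.i.d. random variables with distribution μ_u on a measurable space 𝒰, independent of (X, Y), and let g : 𝒳 × 𝒰 → ℝ be a bounded measurable function. Define the induced conditional CDF F_g(x, t) = μ_u({u : g(x, u) ≤ t}) and let F*(x, t) = P(Y ≤ t | X = x) denote a regular conditional CDF of Y given X = x under μ₀. Then E[2|Y − g(X, U)| − |g(X, U) − g(X, U')|] = 2·∫_𝒳 ∫_ℝ (F_g(x, t) − F*(x, t))² dt μ_X(dx) + ∫_𝒳 (∬ |y − y'| F*(x, dy) F*(x, dy')) μ_X(dx), where μ_X is the marginal law of X and F*(x, ·) also denotes the conditional law of Y given X = x. -/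
open MeasureTheory ProbabilityTheory

lemma aux_max (μ ν : Measure ℝ) [IsProbabilityMeasure μ] [IsProbabilityMeasure ν] (C : ℝ)
    (hμ : ∀ᵐ x ∂μ, |x| ≤ C) (hν : ∀ᵐ x ∂ν, |x| ≤ C) :
    (∫ p, max p.1 p.2 ∂(μ.prod ν)) =
      C - ∫ t in Set.Ioc (-C) C, μ.real (Set.Iic t) * ν.real (Set.Iic t) := by
  set τ : Measure ℝ := volume.restrict (Set.Ioc (-C) C) with hτ
  have : IsFiniteMeasure τ := ⟨by simp [hτ]⟩
  set S : Set ((ℝ × ℝ) × ℝ) := {q | max q.1.1 q.1.2 ≤ q.2} with hS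
  have hSm : MeasurableSet S := measurableSet_le (by fun_prop) (by fun_prop)
  have hint : Integrable (Function.uncurry fun (p : ℝ × ℝ) (t : ℝ) =>
      S.indicator (fun _ => (1 : ℝ)) (p, t)) ((μ.prod ν).prod τ) := by
    have : (Function.uncurry fun (p : ℝ × ℝ) (t : ℝ) =>
      S.indicator (fun _ => (1 : ℝ)) (p, t)) = S.indicator (fun _ => (1 : ℝ)) := by
      ext ⟨p, t⟩; rfl
    rw [this]
    exact (integrable_const (1 : ℝ)).indicator hSm
  have hswap := integral_integral_swap hint
  have hR : ∀ t : ℝ, (∫ p, S.indicator (fun _ => (1 : ℝ)) (p, t) ∂(μ.prod ν)) =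
      μ.real (Set.Iic t) * ν.real (Set.Iic t) := by
    intro t
    have : (fun p : ℝ × ℝ => S.indicator (fun _ => (1 : ℝ)) (p, t)) =
        (Set.Iic t ×ˢ Set.Iic t).indicator (fun _ => (1 : ℝ)) := by
      ext p
      simp [Set.indicator, hS, Prod.le_def]
    rw [this, integral_indicator_const _ (measurableSet_Iic.prod measurableSet_Iic),
      measureReal_prod_prod]
    simp
  have h1 : ∀ᵐ p ∂(μ.prod ν), |p.1| ≤ C := Measure.quasiMeasurePreserving_fst.ae hμ
  have h2 : ∀ᵐ p ∂(μ.prod ν), |p.2| ≤ C := Measure.quasiMeasurePreserving_snd.ae hν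
  have hL : ∀ᵐ p ∂(μ.prod ν), (∫ t, S.indicator (fun _ => (1 : ℝ)) (p, t) ∂τ) =
      C - max p.1 p.2 := by
    filter_upwards [h1, h2] with p h1 h2
    rw [abs_le] at h1 h2
    have : (fun t : ℝ => S.indicator (fun _ => (1 : ℝ)) (p, t)) =
        (Set.Ici (max p.1 p.2)).indicator (fun _ => (1 : ℝ)) := by
      ext t
      simp [Set.indicator, hS]
    rw [this, integral_indicator_const _ measurableSet_Ici, hτ,
      measureReal_restrict_apply measurableSet_Ici]
    have hm1 : -C ≤ max p.1 p.2 := le_max_of_le_left h1.1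
    have hm2 : max p.1 p.2 ≤ C := max_le h1.2 h2.2
    have hae : (Set.Ici (max p.1 p.2) ∩ Set.Ioc (-C) C : Set ℝ) =ᵐ[volume]
        Set.Ioc (max p.1 p.2) C := by
      have : Set.Ioc (max p.1 p.2) C = Set.Ioi (max p.1 p.2) ∩ Set.Ioc (-C) C := by
        ext t
        simp only [Set.mem_Ioc, Set.mem_inter_iff, Set.mem_Ioi]
        constructor
        · rintro ⟨a, b⟩; exact ⟨a, lt_of_le_of_lt hm1 a, b⟩
        · rintro ⟨a, _, b⟩; exact ⟨a, b⟩
      rw [this]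
      exact Ioi_ae_eq_Ici.symm.inter (Filter.EventuallyEq.refl _ _)
    rw [measureReal_congr hae, Real.volume_real_Ioc_of_le hm2]
    simp
  have hmaxint : Integrable (fun p : ℝ × ℝ => max p.1 p.2) (μ.prod ν) := by
    refine Integrable.of_bound (by fun_prop) C ?_
    filter_upwards [h1, h2] with p h1 h2
    rw [Real.norm_eq_abs]
    exact abs_max_le_max_abs_abs.trans (max_le h1 h2)
  rw [integral_congr_ae hL, integral_sub (integrable_const _) hmaxint] at hswap
  simp only [hR] at hswap
  simp at hswap
  simp only [measureReal_def] at *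
  linarith

lemma aux_abs (μ ν : Measure ℝ) [IsProbabilityMeasure μ] [IsProbabilityMeasure ν] (C : ℝ)
    (hμ : ∀ᵐ x ∂μ, |x| ≤ C) (hν : ∀ᵐ x ∂ν, |x| ≤ C) :
    (∫ x, ∫ y, |x - y| ∂ν ∂μ) =
      2 * C - 2 * (∫ t in Set.Ioc (-C) C, μ.real (Set.Iic t) * ν.real (Set.Iic t))
        - (∫ x, x ∂μ) - ∫ y, y ∂ν := by
  have h1 : ∀ᵐ p ∂(μ.prod ν), |p.1| ≤ C := Measure.quasiMeasurePreserving_fst.ae hμ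
  have h2 : ∀ᵐ p ∂(μ.prod ν), |p.2| ≤ C := Measure.quasiMeasurePreserving_snd.ae hν
  have i1 : Integrable (fun p : ℝ × ℝ => p.1) (μ.prod ν) := 
    Integrable.of_bound (by fun_prop) C h1
  have i2 : Integrable (fun p : ℝ × ℝ => p.2) (μ.prod ν) := 
    Integrable.of_bound (by fun_prop) C h2
  have im : Integrable (fun p : ℝ × ℝ => max p.1 p.2) (μ.prod ν) := i1.sup i2
  have ia : Integrable (fun p : ℝ × ℝ => |p.1 - p.2|) (μ.prod ν) := (i1.sub i2).abs
  have e : ∀ p : ℝ × ℝ, |p.1 - p.2| = 2 * max p.1 p.2 - p.1 - p.2 := by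
    intro p
    rcases le_total p.1 p.2 with h | h
    · rw [max_eq_right h, abs_of_nonpos (by linarith)]; ring
    · rw [max_eq_left h, abs_of_nonneg (by linarith)]; ring
  have := integral_prod _ ia
  rw [← this]
  simp only [e]
  rw [integral_sub (f := fun p : ℝ × ℝ => 2 * max p.1 p.2 - p.1) ((im.const_mul 2).sub i1) i2, integral_sub (im.const_mul 2) i1,
    integral_const_mul, aux_max μ ν C hμ hν, integral_fun_fst (fun x : ℝ => x), integral_fun_snd (fun x : ℝ => x)]
  simp
  ring

lemma aux_energy (μ ν : Measure ℝ) [IsProbabilityMeasure μ] [IsProbabilityMeasure ν] (C : ℝ)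
    (hμ : ∀ᵐ x ∂μ, |x| ≤ C) (hν : ∀ᵐ x ∂ν, |x| ≤ C) :
    2 * (∫ y, ∫ z, |y - z| ∂μ ∂ν) - (∫ z, ∫ z', |z - z'| ∂μ ∂μ) =
      2 * (∫ t, (μ.real (Set.Iic t) - ν.real (Set.Iic t)) ^ 2)
        + ∫ y, ∫ y', |y - y'| ∂ν ∂ν := by
  have lo : ∀ (ρ : Measure ℝ) [IsProbabilityMeasure ρ], (∀ᵐ x ∂ρ, |x| ≤ C) → ∀ t, t < -C →
      ρ.real (Set.Iic t) = 0 := by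
    intro ρ _ h t ht
    rw [measureReal_eq_zero_iff, measure_eq_zero_iff_ae_notMem]
    filter_upwards [h] with x hx hxt
    have := (abs_le.1 hx).1
    simp only [Set.mem_Iic] at hxt
    linarith
  have hi : ∀ (ρ : Measure ℝ) [IsProbabilityMeasure ρ], (∀ᵐ x ∂ρ, |x| ≤ C) → ∀ t, C < t →
      ρ.real (Set.Iic t) = 1 := by
    intro ρ _ h t ht
    rw [measureReal_def, ← ENNReal.toReal_one]
    congr 1
    rw [← mem_ae_iff_prob_eq_one measurableSet_Iic]
    filter_upwards [h] with x hx
    have := (abs_le.1 hx).2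
    simp only [Set.mem_Iic]
    linarith
  have hset : (∫ t, (μ.real (Set.Iic t) - ν.real (Set.Iic t)) ^ 2) =
      ∫ t in Set.Ioc (-C) C, (μ.real (Set.Iic t) - ν.real (Set.Iic t)) ^ 2 := by
    rw [← integral_Icc_eq_integral_Ioc]
    refine (setIntegral_eq_integral_of_forall_compl_eq_zero fun t ht => ?_).symm
    rw [Set.mem_Icc, not_and_or, not_le, not_le] at ht
    rcases ht with ht | ht
    · rw [lo μ hμ t ht, lo ν hν t ht]; simp
    · rw [hi μ hμ t ht, hi ν hν t ht]; simp
  have hm : ∀ (ρ : Measure ℝ) [IsProbabilityMeasure ρ],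
      Measurable (fun t => ρ.real (Set.Iic t)) := by
    intro ρ _
    refine Monotone.measurable fun a b hab => ?_
    exact measureReal_mono (Set.Iic_subset_Iic.2 hab)
  have hprod : ∀ (ρ σ : Measure ℝ) [IsProbabilityMeasure ρ] [IsProbabilityMeasure σ],
      Integrable (fun t => ρ.real (Set.Iic t) * σ.real (Set.Iic t))
        (volume.restrict (Set.Ioc (-C) C)) := by
    intro ρ σ _ _
    have : IsFiniteMeasure (volume.restrict (Set.Ioc (-C) C)) := ⟨by simp⟩
    refine Integrable.of_bound ((hm ρ).mul (hm σ)).aestronglyMeasurable 1 ?_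
    refine Filter.Eventually.of_forall fun t => ?_
    rw [Real.norm_eq_abs, abs_of_nonneg (by positivity)]
    exact mul_le_one₀ measureReal_le_one (by positivity) measureReal_le_one
  have e : ∀ t, (μ.real (Set.Iic t) - ν.real (Set.Iic t)) ^ 2 =
      μ.real (Set.Iic t) * μ.real (Set.Iic t) + ν.real (Set.Iic t) * ν.real (Set.Iic t)
        - 2 * (ν.real (Set.Iic t) * μ.real (Set.Iic t)) := fun t => by ring
  rw [hset]
  simp only [e]
  rw [integral_sub (f := fun t => μ.real (Set.Iic t) * μ.real (Set.Iic t) +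
      ν.real (Set.Iic t) * ν.real (Set.Iic t)) ((hprod μ μ).add (hprod ν ν)) ((hprod ν μ).const_mul 2),
    integral_add (hprod μ μ) (hprod ν ν), integral_const_mul,
    aux_abs ν μ C hν hμ, aux_abs μ μ C hμ hμ, aux_abs ν ν C hν hν]
  ring

/-- **Population energy-loss identity for conditional distributions.**
For a pair `(X, Y) ∼ μ₀` on a standard Borel space `𝒳 × ℝ` with `|Y| ≤ c₀` a.s.,
i.i.d. noise `U, U' ∼ μᵤ` independent of `(X,Y)`, and a bounded measurable
generator `g`, we have
`E[2|Y − g(X,U)| − |g(X,U) − g(X,U')|]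
  = 2 ∫∫ (F_g(x,t) − F*(x,t))² dt dμ_X(x) + ∫ ∬ |y − y'| F*(x,dy) F*(x,dy') dμ_X(x)`,
where `F_g(x,t) = μᵤ{u : g(x,u) ≤ t}` and `F*(x,·)` is the regular conditional
distribution of `Y` given `X = x` (here `μ₀.condKernel`). Independence of the
noise from `(X,Y)` is expressed by writing the expectation as an iterated
integral against `μ₀` and two copies of `μᵤ`. -/
theorem energy_loss_population_identity
    {𝒳 𝒰 : Type*} [MeasurableSpace 𝒳] [StandardBorelSpace 𝒳] [MeasurableSpace 𝒰]
    (μ₀ : Measure (𝒳 × ℝ)) [IsProbabilityMeasure μ₀]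
    (μu : Measure 𝒰) [IsProbabilityMeasure μu]
    (c₀ : ℝ) (hc₀ : 0 < c₀) (hYbdd : ∀ᵐ p ∂μ₀, |p.2| ≤ c₀)
    (g : 𝒳 → 𝒰 → ℝ) (hg : Measurable (Function.uncurry g))
    (M : ℝ) (hgbdd : ∀ x u, |g x u| ≤ M) :
    (∫ p, (∫ u, (∫ u', (2 * |p.2 - g p.1 u| - |g p.1 u - g p.1 u'|) ∂μu) ∂μu) ∂μ₀)
      = 2 * (∫ x, (∫ t : ℝ,
            ((μu {u | g x u ≤ t}).toReal - ((μ₀.condKernel x) (Set.Iic t)).toReal) ^ 2)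
            ∂μ₀.fst)
        + ∫ x, (∫ y, (∫ y', |y - y'| ∂μ₀.condKernel x) ∂μ₀.condKernel x) ∂μ₀.fst := by
  set C := max c₀ M with hC
  set κ := μ₀.condKernel with hκ
  have hdis : μ₀.fst ⊗ₘ κ = μ₀ := μ₀.disintegrate κ
  have hY : ∀ᵐ x ∂μ₀.fst, ∀ᵐ y ∂κ x, |y| ≤ C := by
    have : ∀ᵐ p ∂(μ₀.fst ⊗ₘ κ), |p.2| ≤ C := by
      rw [hdis]
      filter_upwards [hYbdd] with p hp using hp.trans (le_max_left _ _)
    exact Measure.ae_ae_of_ae_compProd this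
  have hgC : ∀ x u, |g x u| ≤ C := fun x u => (hgbdd x u).trans (le_max_right _ _)
  have hgx : ∀ x, Measurable (g x) := fun x => hg.comp (measurable_const.prodMk measurable_id)
  -- the pointwise integrand on `𝒳 × ℝ`
  set H : 𝒳 × ℝ → ℝ := fun p =>
    ∫ u, (∫ u', (2 * |p.2 - g p.1 u| - |g p.1 u - g p.1 u'|) ∂μu) ∂μu with hH
  have hHm : StronglyMeasurable H := by
    have hm : Measurable (fun q : ((𝒳 × ℝ) × 𝒰) × 𝒰 =>
        2 * |q.1.1.2 - g q.1.1.1 q.1.2| - |g q.1.1.1 q.1.2 - g q.1.1.1 q.2|) := by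
      have a1 : Measurable (fun q : ((𝒳 × ℝ) × 𝒰) × 𝒰 => g q.1.1.1 q.1.2) :=
        hg.comp (f := fun q : ((𝒳 × ℝ) × 𝒰) × 𝒰 => (q.1.1.1, q.1.2)) (by fun_prop)
      have a2 : Measurable (fun q : ((𝒳 × ℝ) × 𝒰) × 𝒰 => g q.1.1.1 q.2) :=
        hg.comp (f := fun q : ((𝒳 × ℝ) × 𝒰) × 𝒰 => (q.1.1.1, q.2)) (by fun_prop)
      have a3 : Measurable (fun q : ((𝒳 × ℝ) × 𝒰) × 𝒰 => q.1.1.2) := by fun_prop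
      exact ((measurable_norm.comp (a3.sub a1)).const_mul 2).sub
        (measurable_norm.comp (a1.sub a2))
    exact (hm.stronglyMeasurable.integral_prod_right' (ν := μu)).integral_prod_right' (ν := μu)
  have hHb : ∀ᵐ p ∂μ₀, ‖H p‖ ≤ 6 * C := by
    filter_upwards [hYbdd] with p hp
    have hp' : |p.2| ≤ C := hp.trans (le_max_left _ _)
    have key : ∀ u u', ‖2 * |p.2 - g p.1 u| - |g p.1 u - g p.1 u'|‖ ≤ 6 * C := by
      intro u u'
      have b1 := abs_sub (p.2) (g p.1 u)
      have b2 := abs_sub (g p.1 u) (g p.1 u')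
      have b3 := abs_nonneg (p.2 - g p.1 u)
      have b4 := abs_nonneg (g p.1 u - g p.1 u')
      have c1 := hgC p.1 u
      have c2 := hgC p.1 u'
      have c3 := abs_nonneg (g p.1 u)
      rw [Real.norm_eq_abs, abs_le]
      constructor <;> linarith
    have k2 : ∀ u, ‖∫ u', (2 * |p.2 - g p.1 u| - |g p.1 u - g p.1 u'|) ∂μu‖ ≤ 6 * C := by
      intro u
      simpa using norm_integral_le_of_norm_le_const (μ := μu)
        (Filter.Eventually.of_forall (key u))
    simpa using norm_integral_le_of_norm_le_const (μ := μu) (Filter.Eventually.of_forall k2)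
  have hHi : Integrable H (μ₀.fst ⊗ₘ κ) := by
    rw [hdis]
    exact Integrable.of_bound hHm.aestronglyMeasurable _ hHb
  have hL : (∫ p, H p ∂μ₀) = ∫ x, (∫ y, H (x, y) ∂κ x) ∂μ₀.fst := by
    rw [← Measure.integral_compProd hHi, hdis]
  have hAi : Integrable (fun x => ∫ y, H (x, y) ∂κ x) μ₀.fst := by
    have := Integrable.integral_compProd (a := ()) hHi
    exact this
  set B : 𝒳 → ℝ := fun x => ∫ y, (∫ y', |y - y'| ∂κ x) ∂κ x with hB
  have hBm : StronglyMeasurable B := by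
    have h1 : StronglyMeasurable (fun q : 𝒳 × ℝ => ∫ y', |q.2 - y'| ∂κ q.1) := by
      have h0 : StronglyMeasurable (fun r : (𝒳 × ℝ) × ℝ => |r.1.2 - r.2|) := by
        have a3 : Measurable (fun r : (𝒳 × ℝ) × ℝ => r.1.2 - r.2) := by fun_prop
        exact (measurable_norm.comp a3).stronglyMeasurable
      exact h0.integral_kernel_prod_right' (κ := κ.comap Prod.fst measurable_fst)
    exact h1.integral_kernel_prod_right' (κ := κ)
  have hBi : Integrable B μ₀.fst := by
    refine Integrable.of_bound hBm.aestronglyMeasurable (2 * C) ?_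
    filter_upwards [hY] with x hx
    have : ∀ᵐ y ∂κ x, ‖∫ y', |y - y'| ∂κ x‖ ≤ 2 * C := by
      filter_upwards [hx] with y hy
      have : ∀ᵐ y' ∂κ x, ‖|y - y'|‖ ≤ 2 * C := by
        filter_upwards [hx] with y' hy'
        rw [Real.norm_eq_abs, abs_abs]
        have := abs_sub y y'
        linarith
      simpa using norm_integral_le_of_norm_le_const this
    simpa using norm_integral_le_of_norm_le_const this
  have hpt : ∀ᵐ x ∂μ₀.fst, 2 * (∫ t : ℝ,
      ((μu {u | g x u ≤ t}).toReal - ((κ x) (Set.Iic t)).toReal) ^ 2) =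
      (∫ y, H (x, y) ∂κ x) - B x := by
    filter_upwards [hY] with x hx
    set η := μu.map (g x) with hη
    have : IsProbabilityMeasure η := Measure.isProbabilityMeasure_map (hgx x).aemeasurable
    have hηC : ∀ᵐ z ∂η, |z| ≤ C := by
      rw [hη, ae_map_iff (hgx x).aemeasurable (measurableSet_le (by fun_prop) (by fun_prop))]
      exact Filter.Eventually.of_forall (hgC x)
    have he := aux_energy η (κ x) C hηC hx
    have hF : ∀ t, η.real (Set.Iic t) = (μu {u | g x u ≤ t}).toReal := by
      intro t
      rw [measureReal_def, hη, Measure.map_apply (hgx x) measurableSet_Iic]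
      rfl
    have hm1 : ∀ y : ℝ, (∫ z, |y - z| ∂η) = ∫ u, |y - g x u| ∂μu := by
      intro y
      rw [hη, integral_map (hgx x).aemeasurable (by fun_prop)]
    have hbd : ∀ (y : ℝ), Integrable (fun u => |y - g x u|) μu := by
      intro y
      refine ((integrable_const y).sub (Integrable.of_bound
        (hgx x).aestronglyMeasurable C ?_)).abs
      exact Filter.Eventually.of_forall (hgC x)
    have hm2s : StronglyMeasurable (fun z : ℝ => ∫ u, |z - g x u| ∂μu) := by
      have : Measurable (fun q : ℝ × 𝒰 => q.1 - g x q.2) :=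
        measurable_fst.sub ((hgx x).comp measurable_snd)
      exact ((measurable_norm.comp this).stronglyMeasurable).integral_prod_right' (ν := μu)
    have hm2 : (∫ z, ∫ z', |z - z'| ∂η ∂η) = ∫ u, ∫ u', |g x u - g x u'| ∂μu ∂μu := by
      simp only [hm1]
      rw [hη, integral_map (hgx x).aemeasurable hm2s.aestronglyMeasurable]
    have hDi : Integrable (fun u => ∫ u', |g x u - g x u'| ∂μu) μu := by
      refine Integrable.of_bound (hm2s.comp_measurable (hgx x)).aestronglyMeasurable (2 * C) ?_
      refine Filter.Eventually.of_forall fun u => ?_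
      have : ∀ u', ‖|g x u - g x u'|‖ ≤ 2 * C := by
        intro u'
        rw [Real.norm_eq_abs, abs_abs]
        have := abs_sub (g x u) (g x u')
        have := hgC x u
        have := hgC x u'
        linarith
      simpa using norm_integral_le_of_norm_le_const (μ := μu) (Filter.Eventually.of_forall this)
    have hHx : ∀ y, H (x, y) = 2 * (∫ u, |y - g x u| ∂μu)
        - ∫ u, ∫ u', |g x u - g x u'| ∂μu ∂μu := by
      intro y
      simp only [hH]
      have : ∀ u, (∫ u', (2 * |y - g x u| - |g x u - g x u'|) ∂μu) =
          2 * |y - g x u| - ∫ u', |g x u - g x u'| ∂μu := by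
        intro u
        rw [integral_sub (integrable_const _) (hbd _)]
        simp
      simp only [this]
      rw [integral_sub ((hbd y).const_mul 2) hDi, integral_const_mul]
    have hEi : Integrable (fun y => ∫ u, |y - g x u| ∂μu) (κ x) := by
      refine Integrable.of_bound hm2s.aestronglyMeasurable (2 * C) ?_
      filter_upwards [hx] with y hy
      have : ∀ u', ‖|y - g x u'|‖ ≤ 2 * C := by
        intro u'
        rw [Real.norm_eq_abs, abs_abs]
        have := abs_sub y (g x u')
        have := hgC x u'
        linarith
      simpa using norm_integral_le_of_norm_le_const (μ := μu) (Filter.Eventually.of_forall this)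
    have hA : (∫ y, H (x, y) ∂κ x) = 2 * (∫ y, ∫ z, |y - z| ∂η ∂κ x)
        - (∫ z, ∫ z', |z - z'| ∂η ∂η) := by
      rw [hm2]
      simp only [hHx, hm1]
      rw [integral_sub (hEi.const_mul 2) (integrable_const _), integral_const_mul]
      simp
    rw [hA, he]
    simp only [hF, hB]
    simp only [measureReal_def]
    ring
  rw [hL, ← integral_const_mul, integral_congr_ae hpt, integral_sub hAi hBi]
  ring
end

section
/- Let c₀ > 0 and let μ_u be a probability measure on [0, 1]. Let 𝒢 be a set of measurable functions g : [0,1]^d × [0,1] → [−c₀, c₀], and for g, g̃ ∈ 𝒢 define v_{g,g̃}(x) = ∫_ℝ (F_g(x, t) − F_{g̃}(x, t))² dt, where F_g(x, t) = μ_u({u : g(x, u) ≤ t}). Suppose {g₁, …, g_N} ⊆ 𝒢 is an ε*-net of 𝒢 in the sup norm, i.e., for every g ∈ 𝒢 there exists π(g) ∈ {g₁, …, g_N} with sup_{(x,u)} |g(x, u) − π(g)(x, u)| ≤ ε*. Then for all g, g̃ ∈ 𝒢 and all x ∈ [0,1]^d, |v_{g,g̃}(x) − v_{π(g),π(g̃)}(x)|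 ≤ 17·√(c₀·ε*). -/
open MeasureTheory

/-- The induced conditional CDF `F_g(x, t) = μᵤ({u : g(x,u) ≤ t})` of a generator
`g : [0,1]^d × [0,1] → ℝ` under a noise distribution `μᵤ` on `[0,1]`. -/
noncomputable def inducedCDF {d : ℕ} (μu : Measure (Set.Icc (0:ℝ) 1))
    (g : (Fin d → Set.Icc (0:ℝ) 1) → Set.Icc (0:ℝ) 1 → ℝ)
    (x : Fin d → Set.Icc (0:ℝ) 1) (t : ℝ) : ℝ :=
  (μu {u | g x u ≤ t}).toReal

lemma gap_aux {Ω : Type*} [MeasurableSpace Ω] (μ : Measure Ω) [IsProbabilityMeasure μ]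
    (f h : Ω → ℝ) (hf : Measurable f) (hh : Measurable h) (ε : ℝ) (hε : 0 < ε)
    (hfh : ∀ u, |f u - h u| ≤ ε) :
    ∃ m : ℝ → ℝ, Integrable m ∧ ∫ t, m t ≤ ε ∧
      ∀ t, |(μ {u | f u ≤ t}).toReal - (μ {u | h u ≤ t}).toReal| ≤ m t := by
  let E : Set (ℝ × Ω) := {p | min (f p.2) (h p.2) ≤ p.1 ∧ p.1 < max (f p.2) (h p.2)}
  have hE : MeasurableSet E := by
    have hf2 : Measurable fun p : ℝ × Ω => f p.2 := hf.comp measurable_snd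
    have hh2 : Measurable fun p : ℝ × Ω => h p.2 := hh.comp measurable_snd
    exact (measurableSet_le (hf2.min hh2) measurable_fst).inter
      (measurableSet_lt measurable_fst (hf2.max hh2))
  have hmm : Measurable fun t => μ (Prod.mk t ⁻¹' E) := measurable_measure_prodMk_left hE
  have hlin : ∫⁻ t, μ (Prod.mk t ⁻¹' E) ≤ ENNReal.ofReal ε := by
    rw [← Measure.prod_apply hE, Measure.prod_apply_symm hE]
    calc ∫⁻ u, volume ((fun t => (t, u)) ⁻¹' E) ∂μ ≤ ∫⁻ u, ENNReal.ofReal ε ∂μ := by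
          apply lintegral_mono
          intro u
          have : ((fun t => (t, u)) ⁻¹' E) = Set.Ico (min (f u) (h u)) (max (f u) (h u)) := rfl
          simp only [this, Real.volume_Ico]
          apply ENNReal.ofReal_le_ofReal
          rw [max_sub_min_eq_abs]
          rw [abs_sub_comm]
          exact hfh u
      _ = ENNReal.ofReal ε := by simp
  refine ⟨fun t => (μ (Prod.mk t ⁻¹' E)).toReal, ?_, ?_, ?_⟩
  · exact integrable_toReal_of_lintegral_ne_top hmm.aemeasurable
      (ne_top_of_le_ne_top ENNReal.ofReal_ne_top hlin)
  · rw [integral_toReal hmm.aemeasurable (by simp)]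
    exact ENNReal.toReal_le_of_le_ofReal hε.le hlin
  · intro t
    have key : ∀ a b : Ω → ℝ, (∀ u, a u ≤ t → b u ≤ t ∨ (t, u) ∈ E) →
        μ.real {u | a u ≤ t} ≤ μ.real {u | b u ≤ t} + μ.real (Prod.mk t ⁻¹' E) := by
      intro a b hab
      exact (measureReal_mono (s₂ := {u | b u ≤ t} ∪ (Prod.mk t ⁻¹' E))
        (fun u hu => hab u hu)).trans (measureReal_union_le _ _)
    have h1 := key f h (fun u hu => by
      by_cases h' : h u ≤ t
      · exact Or.inl h'
      · exact Or.inr ⟨(min_le_left _ _).trans hu, (not_le.1 h').trans_le (le_max_right _ _)⟩)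
    have h2 := key h f (fun u hu => by
      by_cases h' : f u ≤ t
      · exact Or.inl h'
      · exact Or.inr ⟨(min_le_right _ _).trans hu, (not_le.1 h').trans_le (le_max_left _ _)⟩)
    simp only [Measure.real] at h1 h2
    rw [abs_le]
    constructor <;> linarith

lemma cdf_mono {Ω : Type*} [MeasurableSpace Ω] (μ : Measure Ω) [IsProbabilityMeasure μ]
    (f : Ω → ℝ) : Monotone fun t : ℝ => (μ {u | f u ≤ t}).toReal := by
  intro s t hst
  exact measureReal_mono (μ := μ) (fun u (hu : f u ≤ s) => hu.trans hst)

lemma cdf_mem {Ω : Type*} [MeasurableSpace Ω] (μ : Measure Ω) [IsProbabilityMeasure μ]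
    (f : Ω → ℝ) (t : ℝ) : 0 ≤ (μ {u | f u ≤ t}).toReal ∧ (μ {u | f u ≤ t}).toReal ≤ 1 :=
  ⟨ENNReal.toReal_nonneg, measureReal_le_one (μ := μ)⟩

lemma sq_aux {Ω : Type*} [MeasurableSpace Ω] (μ : Measure Ω) [IsProbabilityMeasure μ]
    (f h : Ω → ℝ) (c : ℝ) (hc : 0 < c) (hf : ∀ u, |f u| ≤ c) (hh : ∀ u, |h u| ≤ c) :
    Integrable (fun t : ℝ => ((μ {u | f u ≤ t}).toReal - (μ {u | h u ≤ t}).toReal) ^ 2) ∧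
    0 ≤ ∫ t : ℝ, ((μ {u | f u ≤ t}).toReal - (μ {u | h u ≤ t}).toReal) ^ 2 ∧
    ∫ t : ℝ, ((μ {u | f u ≤ t}).toReal - (μ {u | h u ≤ t}).toReal) ^ 2 ≤ 2 * c := by
  have hI : Integrable ((Set.Icc (-c) c).indicator (fun _ : ℝ => (1 : ℝ))) := by
    rw [integrable_indicator_iff measurableSet_Icc]
    exact integrableOn_const (by simp)
  have hb : ∀ t : ℝ, ((μ {u | f u ≤ t}).toReal - (μ {u | h u ≤ t}).toReal) ^ 2 ≤
      (Set.Icc (-c) c).indicator (fun _ : ℝ => (1 : ℝ)) t := by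
    intro t
    by_cases ht : t ∈ Set.Icc (-c) c
    · rw [Set.indicator_of_mem ht]
      have := cdf_mem μ f t
      have := cdf_mem μ h t
      rw [sq_le_one_iff_abs_le_one, abs_le]
      constructor <;> linarith
    · rw [Set.indicator_of_notMem ht]
      have : {u | f u ≤ t} = {u | h u ≤ t} := by
        ext u
        have h1 := abs_le.1 (hf u)
        have h2 := abs_le.1 (hh u)
        simp only [Set.mem_ofPred_eq]
        rw [Set.mem_Icc, not_and_or, not_le, not_le] at ht
        rcases ht with ht | ht
        · constructor <;> intro <;> linarith
        · constructor <;> intro <;> linarith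
      rw [this]; simp
  have hint : Integrable
      (fun t : ℝ => ((μ {u | f u ≤ t}).toReal - (μ {u | h u ≤ t}).toReal) ^ 2) := by
    refine hI.mono' ?_ (Filter.Eventually.of_forall fun t => ?_)
    · exact (((cdf_mono μ f).measurable.sub (cdf_mono μ h).measurable).pow_const 2).aestronglyMeasurable
    · rw [Real.norm_of_nonneg (sq_nonneg _)]; exact hb t
  refine ⟨hint, integral_nonneg fun t => sq_nonneg _, ?_⟩
  refine (integral_mono hint hI hb).trans ?_
  rw [integral_indicator measurableSet_Icc]
  simp [Measure.real]
  rw [ENNReal.toReal_ofReal (by linarith)]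
  linarith

/-- **Net stability of the squared-CDF-distance functional.** If `{g₁, …, g_N}` is an
`ε*`-net (in sup norm) of a class `𝒢` of measurable functions
`g : [0,1]^d × [0,1] → [−c₀, c₀]`, with `π` mapping each `g ∈ 𝒢` to a net element
within sup-distance `ε*`, then the functional
`v_{g,g'}(x) = ∫ (F_g(x,t) − F_{g'}(x,t))² dt` satisfies
`|v_{g,g'}(x) − v_{π(g),π(g')}(x)| ≤ 17 √(c₀ ε*)` for all `g, g' ∈ 𝒢` and all `x`. -/
theorem squared_cdf_distance_net_stability {d : ℕ}
    (c₀ : ℝ) (hc₀ : 0 < c₀)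
    (μu : Measure (Set.Icc (0:ℝ) 1)) [IsProbabilityMeasure μu]
    (𝒢 : Set ((Fin d → Set.Icc (0:ℝ) 1) → Set.Icc (0:ℝ) 1 → ℝ))
    (hmeas : ∀ g ∈ 𝒢, Measurable (Function.uncurry g))
    (hbdd : ∀ g ∈ 𝒢, ∀ x u, |g x u| ≤ c₀)
    (εstar : ℝ) (hεstar : 0 < εstar)
    (S : Finset ((Fin d → Set.Icc (0:ℝ) 1) → Set.Icc (0:ℝ) 1 → ℝ))
    (hS : ↑S ⊆ 𝒢)
    (π : ((Fin d → Set.Icc (0:ℝ) 1) → Set.Icc (0:ℝ) 1 → ℝ) →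
         ((Fin d → Set.Icc (0:ℝ) 1) → Set.Icc (0:ℝ) 1 → ℝ))
    (hπS : ∀ g ∈ 𝒢, π g ∈ S)
    (hπnet : ∀ g ∈ 𝒢, ∀ x u, |g x u - π g x u| ≤ εstar) :
    ∀ g ∈ 𝒢, ∀ g' ∈ 𝒢, ∀ x,
      |(∫ t : ℝ, (inducedCDF μu g x t - inducedCDF μu g' x t) ^ 2) -
       (∫ t : ℝ, (inducedCDF μu (π g) x t - inducedCDF μu (π g') x t) ^ 2)|
        ≤ 17 * Real.sqrt (c₀ * εstar) := by
  intro g hg g' hg' x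
  have hp := hS (hπS g hg)
  have hp' := hS (hπS g' hg')
  have hm : ∀ k ∈ 𝒢, Measurable (k x) := fun k hk => (hmeas k hk).of_uncurry_left
  obtain ⟨m, hmi, hme, hmb⟩ := gap_aux μu (g x) (π g x) (hm _ hg) (hm _ hp) εstar hεstar
    (hπnet g hg x)
  obtain ⟨m', hmi', hme', hmb'⟩ := gap_aux μu (g' x) (π g' x) (hm _ hg') (hm _ hp') εstar hεstar
    (hπnet g' hg' x)
  obtain ⟨i1, n1, b1⟩ := sq_aux μu (g x) (g' x) c₀ hc₀ (hbdd _ hg x) (hbdd _ hg' x)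
  obtain ⟨i2, n2, b2⟩ := sq_aux μu (π g x) (π g' x) c₀ hc₀ (hbdd _ hp x) (hbdd _ hp' x)
  have hD1 : |(∫ t : ℝ, (inducedCDF μu g x t - inducedCDF μu g' x t) ^ 2) -
       (∫ t : ℝ, (inducedCDF μu (π g) x t - inducedCDF μu (π g') x t) ^ 2)| ≤ 2 * c₀ := by
    simp only [inducedCDF]
    rw [abs_le]
    constructor <;> linarith
  have hD2 : |(∫ t : ℝ, (inducedCDF μu g x t - inducedCDF μu g' x t) ^ 2) -
       (∫ t : ℝ, (inducedCDF μu (π g) x t - inducedCDF μu (π g') x t) ^ 2)| ≤ 4 * εstar := by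
    simp only [inducedCDF]
    rw [← integral_sub i1 i2]
    have hle : ∫ t, 2 * (m t + m' t) ≤ 4 * εstar := by
      rw [integral_const_mul, integral_add hmi hmi']
      linarith
    refine le_trans ?_ hle
    rw [← Real.norm_eq_abs]
    refine norm_integral_le_of_norm_le ((hmi.add hmi').const_mul 2)
      (Filter.Eventually.of_forall fun t => ?_)
    rw [Real.norm_eq_abs, sq_sub_sq, abs_mul]
    have a1 := cdf_mem μu (g x) t
    have a2 := cdf_mem μu (g' x) t
    have a3 := cdf_mem μu (π g x) t
    have a4 := cdf_mem μu (π g' x) t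
    have e1 := abs_le.1 (hmb t)
    have e2 := abs_le.1 (hmb' t)
    apply mul_le_mul _ _ (abs_nonneg _) (by norm_num)
    · rw [abs_le]; constructor <;> linarith
    · rw [abs_le]; constructor <;> linarith
  set D := |(∫ t : ℝ, (inducedCDF μu g x t - inducedCDF μu g' x t) ^ 2) -
       (∫ t : ℝ, (inducedCDF μu (π g) x t - inducedCDF μu (π g') x t) ^ 2)| with hD
  have hD0 : 0 ≤ D := abs_nonneg _
  have hs := Real.sq_sqrt (mul_pos hc₀ hεstar).le
  have hs0 := Real.sqrt_nonneg (c₀ * εstar)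
  have hDD : D * D ≤ (2 * c₀) * (4 * εstar) := mul_le_mul hD1 hD2 hD0 (by linarith)
  refine abs_le_of_sq_le_sq' ?_ (by positivity) |>.2
  nlinarith [mul_pos hc₀ hεstar]
end

section
/- Let c₀ > 0 and let μ_u be a probability measure on [0, 1]. Let 𝒢 be a set of measurable functions g : [0,1]^d × [0,1] → [−c₀, c₀], and for g, g̃ ∈ 𝒢 define u_{g,g̃}(x, y) = ∫_ℝ (F_g(x, t) − F_{g̃}(x, t))·(F_{g̃}(x, t) − 1{y ≤ t}) dt, where F_g(x, t) = μ_u({u : g(x, u) ≤ t}) and y ranges over [−c₀, c₀]. Suppose {g₁, …, g_N} ⊆ 𝒢 is an ε*-net of 𝒢 in the sup norm, with π(g) denoting a nearest net element of g. Then for all g, g̃ ∈ 𝒢, all x ∈ [0,1]^d and all y ∈ [−c₀, c₀], |u_{g,g̃}(x, y) − u_{π(g),π(g̃)}(x, y)| ≤ 20·√(c₀·ε*). -/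
open MeasureTheory

section Helpers

variable {d : ℕ} (μu : Measure (Set.Icc (0:ℝ) 1)) [IsProbabilityMeasure μu]
  (g h : (Fin d → Set.Icc (0:ℝ) 1) → Set.Icc (0:ℝ) 1 → ℝ)
  (x : Fin d → Set.Icc (0:ℝ) 1)

lemma inducedCDF_mono : Monotone (inducedCDF μu g x) := by
  intro s t hst
  unfold inducedCDF
  apply ENNReal.toReal_mono (measure_ne_top _ _)
  exact measure_mono (fun u hu => le_trans hu hst)

lemma inducedCDF_nonneg (t : ℝ) : 0 ≤ inducedCDF μu g x t := ENNReal.toReal_nonneg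

lemma inducedCDF_le_one (t : ℝ) : inducedCDF μu g x t ≤ 1 := by
  unfold inducedCDF
  exact ENNReal.toReal_le_of_le_ofReal zero_le_one (by simpa using prob_le_one)

lemma inducedCDF_shift (ε : ℝ) (hgh : ∀ u, |g x u - h x u| ≤ ε) (t : ℝ) :
    inducedCDF μu g x t ≤ inducedCDF μu h x (t + ε) := by
  unfold inducedCDF
  apply ENNReal.toReal_mono (measure_ne_top _ _)
  apply measure_mono
  intro u hu
  have h1 := abs_le.1 (hgh u)
  have h2 : g x u ≤ t := hu
  show h x u ≤ t + ε
  linarith [h1.1]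

lemma inducedCDF_low (c t : ℝ) (hb : ∀ u, |g x u| ≤ c) (ht : t < -c) :
    inducedCDF μu g x t = 0 := by
  unfold inducedCDF
  have : {u | g x u ≤ t} = ∅ := by
    ext u
    have := abs_le.1 (hb u)
    simp only [Set.mem_setOf_eq, Set.mem_empty_iff_false, iff_false, not_le]
    linarith [this.1]
  simp [this]

lemma inducedCDF_high (c t : ℝ) (hb : ∀ u, |g x u| ≤ c) (ht : c ≤ t) :
    inducedCDF μu g x t = 1 := by
  unfold inducedCDF
  have : {u | g x u ≤ t} = Set.univ := by
    ext u
    have := abs_le.1 (hb u)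
    simp only [Set.mem_setOf_eq, Set.mem_univ, iff_true]
    linarith [this.2]
  simp [this]

lemma inducedCDF_ii (a b : ℝ) : IntervalIntegrable (inducedCDF μu g x) volume a b :=
  (inducedCDF_mono μu g x).intervalIntegrable

lemma inducedCDF_L1 (c ε : ℝ) (hc : 0 < c) (hε : 0 < ε) (hgh : ∀ u, |g x u - h x u| ≤ ε) :
    ∫ t in (-c)..c, |inducedCDF μu g x t - inducedCDF μu h x t| ≤ 2 * ε := by
  have hi1 : IntervalIntegrable (fun t => inducedCDF μu h x (t + ε)) volume (-c) c :=
    Monotone.intervalIntegrable (fun s t hst => inducedCDF_mono μu h x (by linarith))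
  have hi2 : IntervalIntegrable (fun t => inducedCDF μu h x (t - ε)) volume (-c) c :=
    Monotone.intervalIntegrable (fun s t hst => inducedCDF_mono μu h x (by linarith))
  have hle : ∫ t in (-c)..c, |inducedCDF μu g x t - inducedCDF μu h x t| ≤
      ∫ t in (-c)..c, (inducedCDF μu h x (t + ε) - inducedCDF μu h x (t - ε)) := by
    apply intervalIntegral.integral_mono_on (by linarith)
      ((inducedCDF_ii μu g x _ _).sub (inducedCDF_ii μu h x _ _)).abs (hi1.sub hi2)
    intro t _
    have h1 := inducedCDF_shift μu g h x ε hgh t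
    have h2 := inducedCDF_shift μu h g x ε (fun u => by rw [abs_sub_comm]; exact hgh u) (t - ε)
    rw [sub_add_cancel] at h2
    have h3 := inducedCDF_mono μu h x (show t ≤ t + ε by linarith)
    have h4 := inducedCDF_mono μu h x (show t - ε ≤ t by linarith)
    rw [abs_le]
    constructor <;> linarith
  refine hle.trans ?_
  rw [intervalIntegral.integral_sub hi1 hi2,
    intervalIntegral.integral_comp_add_right (fun t => inducedCDF μu h x t),
    intervalIntegral.integral_comp_sub_right (fun t => inducedCDF μu h x t),
    intervalIntegral.integral_interval_sub_interval_comm' (inducedCDF_ii μu h x _ _)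
      (inducedCDF_ii μu h x _ _) (inducedCDF_ii μu h x _ _)]
  have h1 : ∫ t in (c - ε)..(c + ε), inducedCDF μu h x t ≤ ∫ t in (c - ε)..(c + ε), (1:ℝ) :=
    intervalIntegral.integral_mono_on (by linarith) (inducedCDF_ii μu h x _ _) (by simp)
      (fun t _ => inducedCDF_le_one μu h x t)
  have h2 : 0 ≤ ∫ t in (-c - ε)..(-c + ε), inducedCDF μu h x t :=
    intervalIntegral.integral_nonneg (by linarith) (fun t _ => inducedCDF_nonneg μu h x t)
  simp only [intervalIntegral.integral_const, smul_eq_mul, mul_one] at h1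
  linarith

lemma inducedCDF_L1' (c ε : ℝ) (hc : 0 < c) (hε : 0 < ε) (hgh : ∀ u, |g x u - h x u| ≤ ε) :
    ∫ t in (-c)..c, |inducedCDF μu g x t - inducedCDF μu h x t| ≤ 2 * Real.sqrt (c * ε) := by
  rcases le_total ε c with hle | hle
  · have : ε ≤ Real.sqrt (c * ε) := Real.le_sqrt_of_sq_le (by nlinarith)
    linarith [inducedCDF_L1 μu g h x c ε hc hε hgh]
  · have : c ≤ Real.sqrt (c * ε) := Real.le_sqrt_of_sq_le (by nlinarith)
    have h1 : ∫ t in (-c)..c, |inducedCDF μu g x t - inducedCDF μu h x t| ≤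
        ∫ t in (-c)..c, (1:ℝ) := by
      apply intervalIntegral.integral_mono_on (by linarith)
        ((inducedCDF_ii μu g x _ _).sub (inducedCDF_ii μu h x _ _)).abs (by simp)
      intro t _
      have := inducedCDF_nonneg μu g x t
      have := inducedCDF_nonneg μu h x t
      have := inducedCDF_le_one μu g x t
      have := inducedCDF_le_one μu h x t
      rw [abs_le]
      constructor <;> linarith
    simp only [intervalIntegral.integral_const, smul_eq_mul, mul_one] at h1
    linarith

lemma cross_eq (c y : ℝ) (hc : 0 < c) (hg : ∀ u, |g x u| ≤ c) (hh : ∀ u, |h x u| ≤ c) :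
    (∫ t : ℝ, (inducedCDF μu g x t - inducedCDF μu h x t) *
          (inducedCDF μu h x t - (if y ≤ t then (1:ℝ) else 0))) =
    ∫ t in (-c)..c, (inducedCDF μu g x t - inducedCDF μu h x t) *
          (inducedCDF μu h x t - (if y ≤ t then (1:ℝ) else 0)) := by
  rw [intervalIntegral.integral_of_le (by linarith), ← integral_Icc_eq_integral_Ioc]
  symm
  apply setIntegral_eq_integral_of_forall_compl_eq_zero
  intro t ht
  by_cases h1 : t < -c
  · rw [inducedCDF_low μu g x c t hg h1, inducedCDF_low μu h x c t hh h1]; simp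
  · have h2 : c ≤ t := by
      by_contra h2
      exact ht ⟨by linarith, by linarith⟩
    rw [inducedCDF_high μu g x c t hg h2, inducedCDF_high μu h x c t hh h2]; simp

lemma cross_ii (c y : ℝ) (hc : 0 < c) :
    IntervalIntegrable (fun t => (inducedCDF μu g x t - inducedCDF μu h x t) *
          (inducedCDF μu h x t - (if y ≤ t then (1:ℝ) else 0))) volume (-c) c := by
  have hm : Measurable (fun t => (inducedCDF μu g x t - inducedCDF μu h x t) *
          (inducedCDF μu h x t - (if y ≤ t then (1:ℝ) else 0))) :=
    ((inducedCDF_mono μu g x).measurable.sub (inducedCDF_mono μu h x).measurable).mul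
      ((inducedCDF_mono μu h x).measurable.sub
        (Measurable.ite measurableSet_Ici measurable_const measurable_const))
  refine IntervalIntegrable.mono_fun (f := fun _ => (1:ℝ)) (by simp) hm.aestronglyMeasurable ?_
  refine Filter.Eventually.of_forall (fun t => ?_)
  have := inducedCDF_nonneg μu g x t
  have := inducedCDF_nonneg μu h x t
  have := inducedCDF_le_one μu g x t
  have := inducedCDF_le_one μu h x t
  simp only [Real.norm_eq_abs, abs_mul, abs_one]
  refine mul_le_one₀ ?_ (abs_nonneg _) ?_
  · rw [abs_le]; constructor <;> linarith
  · rw [abs_le]; split_ifs <;> constructor <;> linarith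

end Helpers

lemma cross_pointwise (a b a' b' i : ℝ) (hb : 0 ≤ b) (hb1 : b ≤ 1)
    (ha' : 0 ≤ a') (ha1' : a' ≤ 1) (hb' : 0 ≤ b') (hb1' : b' ≤ 1) (hi : 0 ≤ i) (hi1 : i ≤ 1) :
    |(a - b) * (b - i) - (a' - b') * (b' - i)| ≤ |a - a'| + 2 * |b - b'| := by
  have e : (a - b) * (b - i) - (a' - b') * (b' - i) =
      (a - a') * (b - i) + (b - b') * ((a' - b') - (b - i)) := by ring
  rw [e]
  refine (abs_add_le _ _).trans ?_
  rw [abs_mul, abs_mul]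
  have h1 : |b - i| ≤ 1 := by rw [abs_le]; constructor <;> linarith
  have h2 : |(a' - b') - (b - i)| ≤ 2 := by rw [abs_le]; constructor <;> linarith
  nlinarith [abs_nonneg (a - a'), abs_nonneg (b - b')]

/-- **Net stability of the cross-term functional.** If `{g₁, …, g_N}` is an `ε*`-net
(in sup norm) of a class `𝒢` of measurable functions
`g : [0,1]^d × [0,1] → [−c₀, c₀]`, with `π` mapping each `g ∈ 𝒢` to a net element
within sup-distance `ε*`, then the functional
`u_{g,g'}(x,y) = ∫ (F_g(x,t) − F_{g'}(x,t)) (F_{g'}(x,t) − 1{y ≤ t}) dt` satisfies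
`|u_{g,g'}(x,y) − u_{π(g),π(g')}(x,y)| ≤ 20 √(c₀ ε*)` for all `g, g' ∈ 𝒢`, all `x`,
and all `y ∈ [−c₀, c₀]`. -/
theorem cross_term_net_stability {d : ℕ}
    (c₀ : ℝ) (hc₀ : 0 < c₀)
    (μu : Measure (Set.Icc (0:ℝ) 1)) [IsProbabilityMeasure μu]
    (𝒢 : Set ((Fin d → Set.Icc (0:ℝ) 1) → Set.Icc (0:ℝ) 1 → ℝ))
    (hmeas : ∀ g ∈ 𝒢, Measurable (Function.uncurry g))
    (hbdd : ∀ g ∈ 𝒢, ∀ x u, |g x u| ≤ c₀)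
    (εstar : ℝ) (hεstar : 0 < εstar)
    (S : Finset ((Fin d → Set.Icc (0:ℝ) 1) → Set.Icc (0:ℝ) 1 → ℝ))
    (hS : ↑S ⊆ 𝒢)
    (π : ((Fin d → Set.Icc (0:ℝ) 1) → Set.Icc (0:ℝ) 1 → ℝ) →
         ((Fin d → Set.Icc (0:ℝ) 1) → Set.Icc (0:ℝ) 1 → ℝ))
    (hπS : ∀ g ∈ 𝒢, π g ∈ S)
    (hπnet : ∀ g ∈ 𝒢, ∀ x u, |g x u - π g x u| ≤ εstar) :
    ∀ g ∈ 𝒢, ∀ g' ∈ 𝒢, ∀ x, ∀ y ∈ Set.Icc (-c₀) c₀,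
      |(∫ t : ℝ, (inducedCDF μu g x t - inducedCDF μu g' x t) *
          (inducedCDF μu g' x t - (if y ≤ t then (1:ℝ) else 0))) -
       (∫ t : ℝ, (inducedCDF μu (π g) x t - inducedCDF μu (π g') x t) *
          (inducedCDF μu (π g') x t - (if y ≤ t then (1:ℝ) else 0)))|
        ≤ 20 * Real.sqrt (c₀ * εstar) := by
  intro g hg g' hg' x y _
  have hpg := hS (hπS g hg)
  have hpg' := hS (hπS g' hg')
  rw [cross_eq μu g g' x c₀ y hc₀ (hbdd g hg x) (hbdd g' hg' x),
    cross_eq μu (π g) (π g') x c₀ y hc₀ (hbdd _ hpg x) (hbdd _ hpg' x),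
    ← intervalIntegral.integral_sub (cross_ii μu g g' x c₀ y hc₀)
      (cross_ii μu (π g) (π g') x c₀ y hc₀)]
  have hA := inducedCDF_L1' μu g (π g) x c₀ εstar hc₀ hεstar (hπnet g hg x)
  have hB := inducedCDF_L1' μu g' (π g') x c₀ εstar hc₀ hεstar (hπnet g' hg' x)
  have iA := ((inducedCDF_ii μu g x (-c₀) c₀).sub (inducedCDF_ii μu (π g) x _ _)).abs
  have iB := (((inducedCDF_ii μu g' x (-c₀) c₀).sub (inducedCDF_ii μu (π g') x _ _)).abs).const_mul 2
  refine (intervalIntegral.abs_integral_le_integral_abs (by linarith)).trans ?_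
  have key := intervalIntegral.integral_mono_on (μ := volume) (a := -c₀) (b := c₀) (by linarith)
    ((cross_ii μu g g' x c₀ y hc₀).sub (cross_ii μu (π g) (π g') x c₀ y hc₀)).abs (iA.add iB)
    (fun t _ => cross_pointwise _ _ _ _ _ (inducedCDF_nonneg μu g' x t)
      (inducedCDF_le_one μu g' x t) (inducedCDF_nonneg μu (π g) x t)
      (inducedCDF_le_one μu (π g) x t) (inducedCDF_nonneg μu (π g') x t)
      (inducedCDF_le_one μu (π g') x t) (by split_ifs <;> norm_num) (by split_ifs <;> norm_num))
  refine key.trans ?_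
  rw [intervalIntegral.integral_add iA iB, intervalIntegral.integral_const_mul]
  linarith [Real.sqrt_nonneg (c₀ * εstar)]
end

section
/- Let X and Z be real-valued random variables with CDFs F_X and F_Z, where F_X is continuous and Lipschitz with constant c₁ (i.e., |F_X(y₁) − F_X(y₂)| ≤ c₁|y₁ − y₂| for all y₁, y₂). Let Q_X(α) = inf{t : F_X(t) ≥ α} and Q_Z(α) = inf{t : F_Z(t) ≥ α} denote the quantile functions, and suppose sup_{α ∈ (0,1)} |Q_X(α) − Q_Z(α)| ≤ δ. Then sup_{y ∈ ℝ} |F_X(y) − F_Z(y)| ≤ c₁·δ. -/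
open MeasureTheory ProbabilityTheory

theorem quantile_aux_limits
    {Ω : Type*} [MeasureSpace Ω] [IsProbabilityMeasure (ℙ : Measure Ω)]
    (X : Ω → ℝ) (hX : Measurable X) :
    Monotone (fun t : ℝ => (ℙ {ω | X ω ≤ t}).toReal) ∧
    (∀ α : ℝ, 0 < α → BddBelow {t : ℝ | α ≤ (ℙ {ω | X ω ≤ t}).toReal}) ∧
    (∀ α : ℝ, α < 1 → {t : ℝ | α ≤ (ℙ {ω | X ω ≤ t}).toReal}.Nonempty) := by
  have : IsProbabilityMeasure (Measure.map X ℙ) :=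
    Measure.isProbabilityMeasure_map hX.aemeasurable
  have key : ∀ t : ℝ, (ℙ {ω | X ω ≤ t}).toReal = cdf (Measure.map X ℙ) t := by
    intro t
    rw [cdf_eq_real, Measure.real, Measure.map_apply hX measurableSet_Iic]
    rfl
  simp only [key]
  refine ⟨monotone_cdf _, ?_, ?_⟩
  · intro α hα
    obtain ⟨b, hb⟩ := ((tendsto_cdf_atBot (Measure.map X ℙ)).eventually (gt_mem_nhds hα)).exists
    refine ⟨b, fun t ht => ?_⟩
    by_contra hlt
    have := monotone_cdf (Measure.map X ℙ) (not_le.mp hlt).le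
    have ht' : α ≤ cdf (Measure.map X ℙ) t := ht
    linarith
  · intro α hα
    obtain ⟨b, hb⟩ := ((tendsto_cdf_atTop (Measure.map X ℙ)).eventually (lt_mem_nhds hα)).exists
    exact ⟨b, hb.le⟩

theorem quantile_aux_main (F G : ℝ → ℝ) (c δ : ℝ) (hF : Monotone F)
    (hF0 : ∀ t, 0 ≤ F t) (hF1 : ∀ t, F t ≤ 1) (hG0 : ∀ t, 0 ≤ G t) (hG1 : ∀ t, G t ≤ 1)
    (hFb : ∀ α : ℝ, 0 < α → BddBelow {t : ℝ | α ≤ F t})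
    (hFn : ∀ α : ℝ, α < 1 → {t : ℝ | α ≤ F t}.Nonempty)
    (hG : Monotone G)
    (hGb : ∀ α : ℝ, 0 < α → BddBelow {t : ℝ | α ≤ G t})
    (hGn : ∀ α : ℝ, α < 1 → {t : ℝ | α ≤ G t}.Nonempty)
    (hLip : ∀ y₁ y₂ : ℝ, |F y₁ - F y₂| ≤ c * |y₁ - y₂|)
    (hQ : ∀ α ∈ Set.Ioo (0:ℝ) 1, |sInf {t : ℝ | α ≤ F t} - sInf {t : ℝ | α ≤ G t}| ≤ δ)
    (y : ℝ) : |F y - G y| ≤ c * δ := by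
  have hc : 0 ≤ c := by
    have h := (abs_nonneg _).trans (hLip 1 0)
    simpa using h
  have hδ : 0 ≤ δ := (abs_nonneg _).trans (hQ (1/2) ⟨by norm_num, by norm_num⟩)
  have hcd := mul_nonneg hc hδ
  have lim : ∀ a : ℝ, (∀ ε > 0, a ≤ c * (δ + ε)) → a ≤ c * δ := by
    intro a h
    have ht : Filter.Tendsto (fun ε : ℝ => c * (δ + ε)) (nhdsWithin 0 (Set.Ioi 0))
        (nhds (c * (δ + 0))) :=
      (Continuous.tendsto (by fun_prop) 0).mono_left nhdsWithin_le_nhds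
    rw [add_zero] at ht
    exact ge_of_tendsto ht (Filter.eventually_of_mem self_mem_nhdsWithin h)
  rw [abs_le]
  constructor
  · by_contra hlt
    obtain ⟨α, h1, h2⟩ := exists_between (show F y + c * δ < G y by linarith)
    have hα0 : 0 < α := by linarith [hF0 y]
    have hα1 : α < 1 := by linarith [hG1 y]
    have hz : sInf {t : ℝ | α ≤ G t} ≤ y := csInf_le (hGb α hα0) h2.le
    have hq := (abs_le.mp (hQ α ⟨hα0, hα1⟩)).2
    have := lim (α - F y) (fun ε hε => by
      obtain ⟨t, ht, htl⟩ := exists_lt_of_csInf_lt (hFn α hα1)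
        (show sInf {t : ℝ | α ≤ F t} < y + (δ + ε) by linarith)
      have h3 : α ≤ F t := ht
      have h4 := hF htl.le
      have h5 := (le_abs_self _).trans (hLip (y + (δ + ε)) y)
      rw [add_sub_cancel_left, abs_of_nonneg (by linarith : 0 ≤ δ + ε)] at h5
      linarith)
    linarith
  · by_contra hlt
    obtain ⟨α, h1, h2⟩ := exists_between (show G y < F y - c * δ by linarith)
    have hα0 : 0 < α := by linarith [hG0 y]
    have hα1 : α < 1 := by linarith [hF1 y]
    have hz : y ≤ sInf {t : ℝ | α ≤ G t} := by
      refine le_csInf (hGn α hα1) (fun t ht => ?_)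
      by_contra hty
      have h3 : α ≤ G t := ht
      have h4 := hG (not_le.mp hty).le
      linarith
    have hq := (abs_le.mp (hQ α ⟨hα0, hα1⟩)).1
    have := lim (F y - α) (fun ε hε => by
      have h3 : F (y - (δ + ε)) < α := by
        by_contra h
        have := csInf_le (hFb α hα0) (show y - (δ + ε) ∈ {t : ℝ | α ≤ F t} from not_lt.mp h)
        linarith
      have h5 := (le_abs_self _).trans (hLip y (y - (δ + ε)))
      rw [sub_sub_cancel, abs_of_nonneg (by linarith : 0 ≤ δ + ε)] at h5
      linarith)
    linarith

/-- If the CDF `F_X` of `X` is (continuous and) Lipschitz with constant `c₁`, and the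
quantile functions of `X` and `Z` are uniformly `δ`-close on `(0,1)`, then the CDFs
of `X` and `Z` are uniformly `c₁ δ`-close. -/
theorem cdf_close_of_quantiles_close
    {Ω : Type*} [MeasureSpace Ω] [IsProbabilityMeasure (ℙ : Measure Ω)]
    (X Z : Ω → ℝ) (hX : Measurable X) (hZ : Measurable Z)
    (c₁ δ : ℝ)
    (hLip : ∀ y₁ y₂ : ℝ,
      |(ℙ {ω | X ω ≤ y₁}).toReal - (ℙ {ω | X ω ≤ y₂}).toReal| ≤ c₁ * |y₁ - y₂|)
    (hQ : ∀ α ∈ Set.Ioo (0:ℝ) 1,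
      |sInf {t : ℝ | α ≤ (ℙ {ω | X ω ≤ t}).toReal} -
       sInf {t : ℝ | α ≤ (ℙ {ω | Z ω ≤ t}).toReal}| ≤ δ) :
    ∀ y : ℝ, |(ℙ {ω | X ω ≤ y}).toReal - (ℙ {ω | Z ω ≤ y}).toReal| ≤ c₁ * δ := by
  obtain ⟨hF, hFb, hFn⟩ := quantile_aux_limits X hX
  obtain ⟨hG, hGb, hGn⟩ := quantile_aux_limits Z hZ
  have h1 : ∀ s : Set Ω, (ℙ s).toReal ≤ 1 := fun s => measureReal_le_one
  exact quantile_aux_main (fun t => (ℙ {ω | X ω ≤ t}).toReal)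
    (fun t => (ℙ {ω | Z ω ≤ t}).toReal) c₁ δ hF
    (fun _ => ENNReal.toReal_nonneg) (fun _ => h1 _)
    (fun _ => ENNReal.toReal_nonneg) (fun _ => h1 _) hFb hFn hG hGb hGn hLip hQ
end

section
/- Let c₀ > 0 and let X and Y be real-valued random variables with |X| ≤ c₀ and |Y| ≤ c₀ almost surely, with CDFs F and G respectively. Let w : ℝ → ℝ be continuously differentiable. Then |E[w(X)] − E[w(Y)]|² ≤ (∫_{−c₀}^{c₀} |w'(y)|² dy) · (∫_{−c₀}^{c₀} (F(y) − G(y))² dy). -/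
open MeasureTheory ProbabilityTheory

lemma cs_aux {α : Type*} [MeasurableSpace α] (μ : Measure α) (f g : α → ℝ)
    (hf : Integrable (fun y => f y ^ 2) μ) (hg : Integrable (fun y => g y ^ 2) μ)
    (hfg : Integrable (fun y => f y * g y) μ) :
    (∫ y, f y * g y ∂μ) ^ 2 ≤ (∫ y, f y ^ 2 ∂μ) * ∫ y, g y ^ 2 ∂μ := by
  have key : ∀ t : ℝ, 0 ≤ (∫ y, f y ^ 2 ∂μ) * (t * t) + (2 * ∫ y, f y * g y ∂μ) * t
      + ∫ y, g y ^ 2 ∂μ := by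
    intro t
    have h0 : 0 ≤ ∫ y, (t * f y + g y) ^ 2 ∂μ := integral_nonneg fun y => sq_nonneg _
    have e : ∫ y, (t * f y + g y) ^ 2 ∂μ
        = ∫ y, ((t * t) * f y ^ 2 + (2 * t) * (f y * g y) + g y ^ 2) ∂μ := by
      congr 1; ext y; ring
    have h12 : Integrable (fun y => (t * t) * f y ^ 2 + (2 * t) * (f y * g y)) μ :=
      (hf.const_mul _).add (hfg.const_mul _)
    rw [e, integral_add h12 hg,
      integral_add (hf.const_mul _) (hfg.const_mul _), integral_const_mul,
      integral_const_mul] at h0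
    linarith
  have := discrim_le_zero key
  unfold discrim at this
  nlinarith

lemma cdf_meas {Ω : Type*} [MeasureSpace Ω] [IsProbabilityMeasure (ℙ : Measure Ω)]
    (X : Ω → ℝ) : Measurable (fun y : ℝ => (ℙ {ω | X ω ≤ y}).toReal) := by
  apply Monotone.measurable
  intro a b hab
  exact ENNReal.toReal_mono (measure_ne_top _ _) (measure_mono fun ω (h : X ω ≤ a) => h.trans hab)

lemma cdf_le_one {Ω : Type*} [MeasureSpace Ω] [IsProbabilityMeasure (ℙ : Measure Ω)]
    (X : Ω → ℝ) (y : ℝ) : (ℙ {ω | X ω ≤ y}).toReal ≤ 1 :=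
  ENNReal.toReal_le_of_le_ofReal zero_le_one (by simpa using prob_le_one)

lemma parts_aux {Ω : Type*} [MeasureSpace Ω] [IsProbabilityMeasure (ℙ : Measure Ω)]
    (c₀ : ℝ) (X : Ω → ℝ) (hX : Measurable X)
    (hXb : ∀ᵐ ω ∂ℙ, |X ω| ≤ c₀)
    (w : ℝ → ℝ) (hw : ContDiff ℝ 1 w) :
    ∫ ω, w (X ω) ∂ℙ = w c₀ - ∫ y in Set.Icc (-c₀) c₀,
      deriv w y * (ℙ {ω | X ω ≤ y}).toReal := by
  have hd : Continuous (deriv w) := hw.continuous_deriv le_rfl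
  obtain ⟨C, hC⟩ := (isCompact_Icc (a := -c₀) (b := c₀)).exists_bound_of_continuousOn
    hd.continuousOn
  have hmeas : MeasurableSet {p : Ω × ℝ | X p.1 ≤ p.2} :=
    measurableSet_le (hX.comp measurable_fst) measurable_snd
  have hint : Integrable (Function.uncurry fun (ω : Ω) (y : ℝ) =>
      Set.indicator {p : Ω × ℝ | X p.1 ≤ p.2} (fun p => deriv w p.2) (ω, y))
      ((ℙ : Measure Ω).prod (volume.restrict (Set.Icc (-c₀) c₀))) := by
    have h1 : Integrable (deriv w) (volume.restrict (Set.Icc (-c₀) c₀)) :=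
      hd.continuousOn.integrableOn_Icc
    exact (h1.comp_snd (ℙ : Measure Ω)).indicator hmeas
  have hsw := integral_integral_swap hint
  have hr : ∀ y, ∫ ω, Set.indicator {p : Ω × ℝ | X p.1 ≤ p.2} (fun p => deriv w p.2) (ω, y) ∂ℙ
      = deriv w y * (ℙ {ω | X ω ≤ y}).toReal := by
    intro y
    have : (fun ω => Set.indicator {p : Ω × ℝ | X p.1 ≤ p.2} (fun p => deriv w p.2) (ω, y))
      = Set.indicator {ω | X ω ≤ y} (fun _ => deriv w y) := by
      ext ω; simp [Set.indicator_apply]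
    rw [this, integral_indicator_const _ (measurableSet_le hX measurable_const)]
    simp [Measure.real, mul_comm]
  have hl : ∀ᵐ ω ∂(ℙ : Measure Ω), ∫ y in Set.Icc (-c₀) c₀,
      Set.indicator {p : Ω × ℝ | X p.1 ≤ p.2} (fun p => deriv w p.2) (ω, y)
      = w c₀ - w (X ω) := by
    filter_upwards [hXb] with ω hω
    obtain ⟨h1, h2⟩ := abs_le.mp hω
    have : (fun y => Set.indicator {p : Ω × ℝ | X p.1 ≤ p.2} (fun p => deriv w p.2) (ω, y))
      = Set.indicator (Set.Ici (X ω)) (deriv w) := by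
      ext y; simp [Set.indicator_apply]
    rw [this, setIntegral_indicator measurableSet_Ici]
    have hs : Set.Icc (-c₀) c₀ ∩ Set.Ici (X ω) = Set.Icc (X ω) c₀ := by
      ext y; simp only [Set.mem_inter_iff, Set.mem_Icc, Set.mem_Ici]
      constructor
      · rintro ⟨⟨_, b⟩, c⟩; exact ⟨c, b⟩
      · rintro ⟨a, b⟩; exact ⟨⟨h1.trans a, b⟩, a⟩
    rw [hs, integral_Icc_eq_integral_Ioc, ← intervalIntegral.integral_of_le h2]
    exact intervalIntegral.integral_deriv_eq_sub
      (fun x _ => (hw.differentiable one_ne_zero) x) (hd.intervalIntegrable _ _)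
  have hi : Integrable (fun ω => w c₀ - w (X ω)) (ℙ : Measure Ω) :=
    hint.integral_prod_left.congr hl
  have hiw : ∫ ω, w (X ω) ∂ℙ = w c₀ - ∫ ω, (w c₀ - w (X ω)) ∂ℙ := by
    have := integral_sub (integrable_const (w c₀) (μ := (ℙ : Measure Ω))) hi
    simpa using this
  rw [hiw, ← integral_congr_ae hl, hsw]
  simp_rw [hr]



/-- For real random variables `X, Y` bounded a.s. by `c₀` with CDFs `F, G`, and a
continuously differentiable `w : ℝ → ℝ`,
`|E[w(X)] − E[w(Y)]|² ≤ (∫_{−c₀}^{c₀} |w'|²) (∫_{−c₀}^{c₀} (F − G)²)`. -/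
theorem moment_difference_cauchy_schwarz
    {Ω : Type*} [MeasureSpace Ω] [IsProbabilityMeasure (ℙ : Measure Ω)]
    (c₀ : ℝ) (hc₀ : 0 < c₀)
    (X Y : Ω → ℝ) (hX : Measurable X) (hY : Measurable Y)
    (hXb : ∀ᵐ ω ∂ℙ, |X ω| ≤ c₀) (hYb : ∀ᵐ ω ∂ℙ, |Y ω| ≤ c₀)
    (w : ℝ → ℝ) (hw : ContDiff ℝ 1 w) :
    |(∫ ω, w (X ω) ∂ℙ) - ∫ ω, w (Y ω) ∂ℙ| ^ 2
      ≤ (∫ y in Set.Icc (-c₀) c₀, |deriv w y| ^ 2) *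
        ∫ y in Set.Icc (-c₀) c₀,
          ((ℙ {ω | X ω ≤ y}).toReal - (ℙ {ω | Y ω ≤ y}).toReal) ^ 2 := by
  have hd : Continuous (deriv w) := hw.continuous_deriv le_rfl
  have hF := cdf_meas X
  have hG := cdf_meas Y
  have hI : Integrable (deriv w) (volume.restrict (Set.Icc (-c₀) c₀)) :=
    hd.continuousOn.integrableOn_Icc
  have hp : ∀ Z : Ω → ℝ, Integrable (fun y => deriv w y * (ℙ {ω | Z ω ≤ y}).toReal)
      (volume.restrict (Set.Icc (-c₀) c₀)) := fun Z =>
    hI.mul_bdd (c := 1) (cdf_meas Z).aestronglyMeasurable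
      (Filter.Eventually.of_forall fun y => by
        rw [Real.norm_of_nonneg ENNReal.toReal_nonneg]; exact cdf_le_one Z y)
  rw [parts_aux c₀ X hX hXb w hw, parts_aux c₀ Y hY hYb w hw, sq_abs]
  have e : (w c₀ - ∫ y in Set.Icc (-c₀) c₀, deriv w y * (ℙ {ω | X ω ≤ y}).toReal)
      - (w c₀ - ∫ y in Set.Icc (-c₀) c₀, deriv w y * (ℙ {ω | Y ω ≤ y}).toReal)
      = - ∫ y in Set.Icc (-c₀) c₀, deriv w y *
        ((ℙ {ω | X ω ≤ y}).toReal - (ℙ {ω | Y ω ≤ y}).toReal) := by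
    simp_rw [mul_sub]
    rw [integral_sub (hp X) (hp Y)]
    ring
  rw [e, neg_sq]
  simp_rw [sq_abs]
  apply cs_aux
  · exact (hd.pow 2).continuousOn.integrableOn_Icc
  · refine Integrable.of_bound ((hF.sub hG).pow_const 2).aestronglyMeasurable 1
      (Filter.Eventually.of_forall fun y => ?_)
    have a1 := cdf_le_one X y
    have a2 := cdf_le_one Y y
    have b1 : 0 ≤ (ℙ {ω | X ω ≤ y}).toReal := ENNReal.toReal_nonneg
    have b2 : 0 ≤ (ℙ {ω | Y ω ≤ y}).toReal := ENNReal.toReal_nonneg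
    rw [Real.norm_of_nonneg (sq_nonneg _), sq_le_one_iff_abs_le_one, abs_le]
    constructor <;> linarith
  · simp_rw [mul_sub]
    exact (hp X).sub (hp Y)
end

section
/- Let C_d > 0, let F : ℝ → [0, 1] be Lipschitz with constant C_d (i.e., |F(y₁) − F(y₂)| ≤ C_d|y₁ − y₂| for all y₁, y₂), and let G : ℝ → [0, 1] be nondecreasing. Then for every ỹ ∈ ℝ, |F(ỹ) − G(ỹ)|³ ≤ 3·C_d·∫_{−∞}^{∞} (F(y) − G(y))² dy. -/
open MeasureTheory

lemma aux_lintegral (f : ℝ → ℝ) (d k y0 a b : ℝ) (hk : k ≠ 0) (hab : a ≤ b)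
    (h : ∀ y ∈ Set.Ioc a b, (d + k * (y - y0)) ^ 2 ≤ f y) :
    ENNReal.ofReal ((d + k * (b - y0)) ^ 3 / (3 * k) - (d + k * (a - y0)) ^ 3 / (3 * k))
      ≤ ∫⁻ y : ℝ, ENNReal.ofReal (f y) := by
  have hc : Continuous (fun y : ℝ => (d + k * (y - y0)) ^ 2) := by fun_prop
  have h1 : ∫ y in a..b, (d + k * (y - y0)) ^ 2
      = (d + k * (b - y0)) ^ 3 / (3 * k) - (d + k * (a - y0)) ^ 3 / (3 * k) := by
    apply intervalIntegral.integral_eq_sub_of_hasDerivAt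
      (f := fun y => (d + k * (y - y0)) ^ 3 / (3 * k))
    · intro x _
      have h2 : HasDerivAt (fun y : ℝ => d + k * (y - y0)) (k * 1) x :=
        (((hasDerivAt_id x).sub_const y0).const_mul k).const_add d
      refine HasDerivAt.congr_deriv ((h2.pow 3).div_const (3 * k)) ?_
      rw [div_eq_iff (by positivity)]
      push_cast
      ring
    · exact hc.intervalIntegrable _ _
  rw [← h1, intervalIntegral.integral_of_le hab,
    ofReal_integral_eq_lintegral_ofReal]
  · calc _ ≤ ∫⁻ y in Set.Ioc a b, ENNReal.ofReal (f y) :=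
          setLIntegral_mono' measurableSet_Ioc
            (fun y hy => ENNReal.ofReal_le_ofReal (h y hy))
      _ ≤ _ := setLIntegral_le_lintegral _ _
  · exact (hc.intervalIntegrable a b).1
  · exact Filter.Eventually.of_forall (fun y => sq_nonneg _)

/-- If `F : ℝ → [0,1]` is Lipschitz with constant `C_d` and `G : ℝ → [0,1]` is
nondecreasing, then for every `y0`, `|F(y0) − G(y0)|³ ≤ 3 C_d ∫ (F − G)²`. The
right-hand side is stated as a Lebesgue integral in `ℝ≥0∞`, so that the
inequality also covers the case where the integral is infinite. -/
theorem cdf_pointwise_cubed_bound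
    (Cd : ℝ) (hCd : 0 < Cd)
    (F G : ℝ → ℝ)
    (hF01 : ∀ y, F y ∈ Set.Icc (0:ℝ) 1) (hG01 : ∀ y, G y ∈ Set.Icc (0:ℝ) 1)
    (hFLip : ∀ y₁ y₂ : ℝ, |F y₁ - F y₂| ≤ Cd * |y₁ - y₂|)
    (hG : Monotone G) :
    ∀ y0 : ℝ, ENNReal.ofReal (|F y0 - G y0| ^ 3)
      ≤ ENNReal.ofReal (3 * Cd) * ∫⁻ y : ℝ, ENNReal.ofReal ((F y - G y) ^ 2) := by
  intro y0
  have key : ENNReal.ofReal (|F y0 - G y0| ^ 3 / (3 * Cd))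
      ≤ ∫⁻ y : ℝ, ENNReal.ofReal ((F y - G y) ^ 2) := by
    set d := |F y0 - G y0| with hd
    have hd0 : 0 ≤ d := abs_nonneg _
    have hdc : 0 ≤ d / Cd := by positivity
    have hcc : Cd * (d / Cd) = d := by field_simp
    rcases le_total (G y0) (F y0) with hle | hle
    · have hd' : d = F y0 - G y0 := abs_of_nonneg (by linarith)
      convert aux_lintegral (fun y => (F y - G y) ^ 2) d Cd y0 (y0 - d / Cd) y0 hCd.ne'
        (by linarith) ?_ using 2
      · have : d + Cd * (y0 - d / Cd - y0) = 0 := by linarith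
        rw [this]; simp
      · intro y hy
        have h1 := (abs_le.1 (hFLip y0 y)).2
        rw [abs_of_nonneg (by linarith [hy.2])] at h1
        have h2 := hG hy.2
        have h3 : Cd * (y0 - d / Cd) ≤ Cd * y := mul_le_mul_of_nonneg_left hy.1.le hCd.le
        exact pow_le_pow_left₀ (by linarith) (by linarith) 2
    · have hd' : d = G y0 - F y0 := by rw [hd, abs_sub_comm]; exact abs_of_nonneg (by linarith)
      convert aux_lintegral (fun y => (F y - G y) ^ 2) d (-Cd) y0 y0 (y0 + d / Cd)
        (neg_ne_zero.2 hCd.ne') (by linarith) ?_ using 2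
      · have : d + -Cd * (y0 + d / Cd - y0) = 0 := by linarith
        rw [this]; simp [div_neg]
      · intro y hy
        have h1 := (abs_le.1 (hFLip y y0)).2
        rw [abs_of_nonneg (by linarith [hy.1])] at h1
        have h2 := hG hy.1.le
        have h3 : Cd * y ≤ Cd * (y0 + d / Cd) := mul_le_mul_of_nonneg_left hy.2 hCd.le
        have h4 : (F y - G y) ^ 2 = (G y - F y) ^ 2 := by ring
        simp only [h4]
        exact pow_le_pow_left₀ (by linarith) (by linarith) 2
  calc ENNReal.ofReal (|F y0 - G y0| ^ 3)
      = ENNReal.ofReal (3 * Cd) * ENNReal.ofReal (|F y0 - G y0| ^ 3 / (3 * Cd)) := by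
        rw [← ENNReal.ofReal_mul (by positivity)]
        congr 1
        field_simp
    _ ≤ _ := by gcongr
end
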